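/- Let β > 2, let (α_N) satisfy α_N > 0 and α_N → 0, let p(N) ∈ (0,1] satisfy N·p(N) → ∞, and assume p(N)·N·α_N → 0. Then the pushforward of the quenched Gibbs measure μ^ε_{N,α_N,β} under σ ↦ (m₁(σ), m₂(σ)) converges in distribution in probability to (1/4)(δ_{(m⁺(β/2), m⁺(β/2))} + δ_{(m⁺(β/2), m⁻(β/2))} + δ_{(m⁻(β/2), m⁺(β/2))} + δ_{(m⁻(β/2), m⁻(β/2))}): for every bounded continuous f : ℝ² → ℝ and every η > 0, the P-probability that the integral of f(m₁,m₂) under μ^ε_{N,α_N,β} differs from the integral of f under this four-point mixture by more than η tends to 0 as N → ∞ through even integers. -/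

import Mathlib

/-!
Without the coupling between the blocks, `m₁` and `m₂` are the magnetizations of two independent
Curie–Weiss models with `n = N / 2` spins at inverse temperature `b = β / 2`. The energy
`n b m ^ 2 / 2` lies above each of its tangents, whose partition functions are explicit, and
touches the tangent at `x` when the magnetization is `x`. Hence the magnetization equals `x` with
probability at most `exp (n (F x - F m⁺))`, where `F x = log (2 cosh (b x)) - b x ^ 2 / 2`. Strict
concavity of `tanh` on `[0, ∞)` shows that `F` is maximal exactly at `± m⁺`, so the absolute
magnetizations concentrate at `m⁺`, and flipping all spins of one block distributes the mass
equally over the four points.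

The coupling changes the Hamiltonian by at most `α K`, where `K` is the number of bonds kept by
the dilution. Since `K` has mean `n p`, Markov's inequality makes `α K` small in probability, and
tilting a measure by a uniformly small function hardly changes integrals of bounded functions.
-/

open MeasureTheory Filter

noncomputable section

/-- The spin value ±1 associated to a Boolean. -/
def spinVal (s : Bool) : ℝ := if s then 1 else -1

/-- A spin configuration on `N = 2n` sites, split into the two blocks
`B₁` (first component) and `B₂` (second component); the perfect matching
pairs the `i`-th spin of `B₁` with the `i`-th spin of `B₂`. -/
abbrev TwoConf (n : ℕ) := (Fin n → Bool) × (Fin n → Bool)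

/-- Block magnetization `m₁(σ) = (2/N) ∑_{i ∈ B₁} σᵢ` with `N = 2n`. -/
def mag1 (n : ℕ) (σ : TwoConf n) : ℝ := (2 / (2 * n : ℝ)) * ∑ i, spinVal (σ.1 i)

/-- Block magnetization `m₂(σ) = (2/N) ∑_{i ∈ B₂} σᵢ` with `N = 2n`. -/
def mag2 (n : ℕ) (σ : TwoConf n) : ℝ := (2 / (2 * n : ℝ)) * ∑ i, spinVal (σ.2 i)

/-- The diluted Hamiltonian
`H^ε_{N,α,β}(σ) = −(β/(2N))(∑_{i,j∈B₁} σᵢσⱼ + ∑_{i,j∈B₂} σᵢσⱼ)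
  − α ∑_{i∈B₁} ε_i σᵢ σ_{i+N/2}` with `N = 2n`. -/
def dilH (n : ℕ) (α β : ℝ) (ε : Fin n → Bool) (σ : TwoConf n) : ℝ :=
  -(β / (2 * (2 * n : ℝ))) *
      ((∑ i, ∑ j, spinVal (σ.1 i) * spinVal (σ.1 j)) +
        ∑ i, ∑ j, spinVal (σ.2 i) * spinVal (σ.2 j))
    - α * ∑ i, (if ε i then (1 : ℝ) else 0) * (spinVal (σ.1 i) * spinVal (σ.2 i))

/-- The distribution of the magnetization vector `(m₁, m₂)` under the quenched Gibbs
measure `μ^ε_{N,α,β}`, i.e. the pushforward of `μ^ε_{N,α,β}` under `σ ↦ (m₁(σ), m₂(σ))`. -/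
def dilMagDist (n : ℕ) (α β : ℝ) (ε : Fin n → Bool) : Measure (ℝ × ℝ) :=
  (∑ σ : TwoConf n, ENNReal.ofReal (Real.exp (-dilH n α β ε σ)))⁻¹ •
    ∑ σ : TwoConf n,
      ENNReal.ofReal (Real.exp (-dilH n α β ε σ)) • Measure.dirac (mag1 n σ, mag2 n σ)

/-- The probability, under i.i.d. Bernoulli(q) dilution variables `(ε_i)_{i ∈ B₁}`,
of a set `A` of dilution configurations. -/
def bernProb (n : ℕ) (q : ℝ) (A : Set (Fin n → Bool)) : ℝ :=
  ∑ ε : Fin n → Bool, A.indicator (fun ε => ∏ i, if ε i then q else 1 - q) ε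

section Tanh

theorem hasDerivAt_tanh (x : ℝ) : HasDerivAt Real.tanh (1 / Real.cosh x ^ 2) x := by
  have hcosh : Real.cosh x ≠ 0 := (Real.cosh_pos x).ne'
  rw [show Real.tanh = fun y => Real.sinh y / Real.cosh y from
    funext Real.tanh_eq_sinh_div_cosh]
  refine ((Real.hasDerivAt_sinh x).fun_div (Real.hasDerivAt_cosh x) hcosh).congr_deriv ?_
  rw [← Real.cosh_sq_sub_sinh_sq x]
  ring

theorem continuous_tanh : Continuous Real.tanh :=
  continuous_iff_continuousAt.2 fun x => (hasDerivAt_tanh x).continuousAt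

theorem strictConcaveOn_tanh : StrictConcaveOn ℝ (Set.Ici 0) Real.tanh := by
  refine StrictAntiOn.strictConcaveOn_of_deriv (convex_Ici 0) continuous_tanh.continuousOn ?_
  rw [interior_Ici]
  intro x hx y hy hxy
  rw [(hasDerivAt_tanh x).deriv, (hasDerivAt_tanh y).deriv]
  have hcosh : Real.cosh x < Real.cosh y := by
    rwa [Real.cosh_lt_cosh, abs_of_pos hx, abs_of_pos hy]
  have := Real.cosh_pos x
  gcongr

variable {b m x : ℝ}

theorem lt_tanh_mul_of_lt_fixedPoint (hb : 0 < b) (hm : m = Real.tanh (b * m)) (hx : 0 < x)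
    (hxm : x < m) : x < Real.tanh (b * x) := by
  have hm0 : 0 < m := hx.trans hxm
  have hconcave := strictConcaveOn_tanh.2 (Set.self_mem_Ici (a := (0 : ℝ)))
    (Set.mem_Ici.2 (mul_pos hb hm0).le) (mul_pos hb hm0).ne
    (sub_pos.2 ((div_lt_one hm0).2 hxm)) (div_pos hx hm0) (sub_add_cancel 1 (x / m))
  simpa only [smul_eq_mul, Real.tanh_zero, mul_zero, zero_add, ← hm, mul_left_comm (x / m) b m,
    div_mul_cancel₀ x hm0.ne'] using hconcave

theorem tanh_mul_lt_of_gt_fixedPoint (hm : IsGreatest {z | z = Real.tanh (b * z)} m)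
    (hx : m < x) : Real.tanh (b * x) < x := by
  by_contra! hle
  have hcont : ContinuousOn (fun z => Real.tanh (b * z) - z) (Set.Icc x 1) :=
    ((continuous_tanh.comp (continuous_const_mul b)).sub continuous_id).continuousOn
  obtain ⟨z, hz, hz0⟩ := intermediate_value_Icc' (hle.trans (Real.tanh_lt_one _).le) hcont
    ⟨(sub_neg.2 (Real.tanh_lt_one _)).le, sub_nonneg.2 hle⟩
  exact (hx.trans_le hz.1).not_ge (hm.2 (sub_eq_zero.1 hz0).symm)

theorem nonneg_of_isGreatest_fixedPoint (hm : IsGreatest {z | z = Real.tanh (b * z)} m) :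
    0 ≤ m :=
  hm.2 (by simp)

end Tanh

section FreeEnergy

/-- The Curie–Weiss free energy functional `log (2 cosh (b m)) - b m² / 2` at inverse
temperature `b`: up to subexponential factors, `exp (n * freeEnergy b m)` is the total weight of
the configurations of `n` spins with magnetization near `m`, when `m` maximizes it. Its critical
points for `b ≠ 0` are the solutions of `m = tanh (b m)`. -/
def freeEnergy (b m : ℝ) : ℝ := Real.log (2 * Real.cosh (b * m)) - b * m ^ 2 / 2

variable {b m x : ℝ}

theorem exp_mul_freeEnergy (n : ℕ) (b m : ℝ) :
    Real.exp (n * freeEnergy b m) =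
      (2 * Real.cosh (b * m)) ^ n * Real.exp (-(n * (b * m ^ 2 / 2))) := by
  have hcosh : 0 < 2 * Real.cosh (b * m) := mul_pos two_pos (Real.cosh_pos _)
  rw [freeEnergy, mul_sub, sub_eq_add_neg, Real.exp_add, Real.exp_nat_mul, Real.exp_log hcosh]

theorem hasDerivAt_freeEnergy (b x : ℝ) :
    HasDerivAt (freeEnergy b) (b * (Real.tanh (b * x) - x)) x := by
  have hcosh := Real.cosh_pos (b * x)
  have hlog := (((hasDerivAt_id x).const_mul b).cosh.const_mul 2).log (mul_pos two_pos hcosh).ne'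
  refine (hlog.fun_sub (((hasDerivAt_pow 2 x).const_mul b).div_const 2)).congr_deriv ?_
  rw [Real.tanh_eq_sinh_div_cosh]
  simp only [id, Nat.cast_ofNat, Nat.add_one_sub_one, pow_one, mul_one]
  field_simp

theorem continuous_freeEnergy (b : ℝ) : Continuous (freeEnergy b) :=
  continuous_iff_continuousAt.2 fun x => (hasDerivAt_freeEnergy b x).continuousAt

theorem freeEnergy_abs (b x : ℝ) : freeEnergy b |x| = freeEnergy b x := by
  rcases abs_choice x with h | h <;> simp [h, freeEnergy]

theorem strictMonoOn_freeEnergy (hb : 0 < b) (hm : m = Real.tanh (b * m)) :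
    StrictMonoOn (freeEnergy b) (Set.Icc 0 m) := by
  refine strictMonoOn_of_deriv_pos (convex_Icc 0 m) (continuous_freeEnergy b).continuousOn ?_
  rw [interior_Icc]
  intro x hx
  rw [(hasDerivAt_freeEnergy b x).deriv]
  exact mul_pos hb (sub_pos.2 (lt_tanh_mul_of_lt_fixedPoint hb hm hx.1 hx.2))

theorem strictAntiOn_freeEnergy (hb : 0 < b)
    (hm : IsGreatest {z | z = Real.tanh (b * z)} m) :
    StrictAntiOn (freeEnergy b) (Set.Ici m) := by
  refine strictAntiOn_of_deriv_neg (convex_Ici m) (continuous_freeEnergy b).continuousOn ?_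
  rw [interior_Ici]
  intro x hx
  rw [(hasDerivAt_freeEnergy b x).deriv]
  exact mul_neg_of_pos_of_neg hb (sub_neg.2 (tanh_mul_lt_of_gt_fixedPoint hm hx))

theorem freeEnergy_lt_of_abs_ne (hb : 0 < b) (hm : IsGreatest {z | z = Real.tanh (b * z)} m)
    (hx : |x| ≠ m) : freeEnergy b x < freeEnergy b m := by
  have hm0 := nonneg_of_isGreatest_fixedPoint hm
  rw [← freeEnergy_abs b x]
  rcases hx.lt_or_gt with hlt | hgt
  · exact strictMonoOn_freeEnergy hb hm.1 ⟨abs_nonneg x, hlt.le⟩ ⟨hm0, le_rfl⟩ hlt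
  · exact strictAntiOn_freeEnergy hb hm Set.self_mem_Ici hgt.le hgt

theorem exists_freeEnergy_le_sub (hb : 0 < b) (hm : IsGreatest {z | z = Real.tanh (b * z)} m)
    {K : Set ℝ} (hK : IsCompact K) (hmK : ∀ x ∈ K, |x| ≠ m) :
    ∃ c > 0, ∀ x ∈ K, freeEnergy b x ≤ freeEnergy b m - c := by
  rcases K.eq_empty_or_nonempty with rfl | hne
  · exact ⟨1, one_pos, by simp⟩
  · obtain ⟨x₀, hx₀, hmax⟩ := hK.exists_isMaxOn hne (continuous_freeEnergy b).continuousOn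
    refine ⟨freeEnergy b m - freeEnergy b x₀,
      sub_pos.2 (freeEnergy_lt_of_abs_ne hb hm (hmK x₀ hx₀)), fun x hx => ?_⟩
    rw [sub_sub_cancel]
    exact hmax hx

end FreeEnergy

section Tilted

variable {Ω Ω' : Type*} [MeasurableSpace Ω] [MeasurableSpace Ω'] {μ : Measure Ω}

theorem measureReal_tilted_le {h k : Ω → ℝ} {A : Set Ω} (hA : MeasurableSet A)
    (hk : Integrable (fun ω => Real.exp (k ω)) μ) (hhk : ∀ ω ∈ A, h ω ≤ k ω) :
    (μ.tilted h).real A ≤ (∫ ω, Real.exp (k ω) ∂μ) / ∫ ω, Real.exp (h ω) ∂μ := by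
  have hZ : 0 ≤ ∫ ω, Real.exp (h ω) ∂μ := integral_nonneg fun ω => (Real.exp_pos _).le
  calc (μ.tilted h).real A
      = (∫ ω in A, Real.exp (h ω) ∂μ) / ∫ ω, Real.exp (h ω) ∂μ := by
        rw [← integral_div, ← setIntegral_one_eq_measureReal, setIntegral_tilted' _ _ hA]
        simp
    _ ≤ _ := by
        refine div_le_div_of_nonneg_right ?_ hZ
        calc ∫ ω in A, Real.exp (h ω) ∂μ
            ≤ ∫ ω in A, Real.exp (k ω) ∂μ := by
              refine integral_mono_of_nonneg (.of_forall fun ω => (Real.exp_pos _).le)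
                hk.integrableOn ((ae_restrict_iff' hA).2 (.of_forall fun ω hω => ?_))
              exact Real.exp_le_exp.2 (hhk ω hω)
          _ ≤ ∫ ω, Real.exp (k ω) ∂μ :=
              setIntegral_le_integral hk (.of_forall fun ω => (Real.exp_pos _).le)

theorem abs_exp_sub_one_le_exp_abs_sub_one (x : ℝ) : |Real.exp x - 1| ≤ Real.exp |x| - 1 := by
  rcases le_total 0 x with hx | hx
  · rw [abs_of_nonneg hx, abs_of_nonneg (sub_nonneg.2 (Real.one_le_exp hx))]
  · rw [abs_of_nonpos hx, abs_of_nonpos (sub_nonpos.2 (Real.exp_le_one_iff.2 hx))]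
    linarith [Real.one_le_cosh x, Real.cosh_eq x]

theorem integrable_exp_of_abs_le [IsFiniteMeasure μ] {h : Ω → ℝ} {δ : ℝ}
    (hh : AEMeasurable h μ) (hδ : ∀ ω, |h ω| ≤ δ) : Integrable (fun ω => Real.exp (h ω)) μ :=
  .of_bound hh.exp.aestronglyMeasurable (Real.exp δ)
    (.of_forall fun ω => by simpa using (abs_le.1 (hδ ω)).2)

theorem abs_log_integral_exp_le [IsProbabilityMeasure μ] {h : Ω → ℝ} {δ : ℝ}
    (hh : AEMeasurable h μ) (hδ : ∀ ω, |h ω| ≤ δ) :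
    |Real.log (∫ ω, Real.exp (h ω) ∂μ)| ≤ δ := by
  have hint := integrable_exp_of_abs_le hh hδ
  have hZ := integral_exp_pos hint
  rw [abs_le, Real.le_log_iff_exp_le hZ, Real.log_le_iff_le_exp hZ]
  constructor
  · simpa using integral_mono (integrable_const _) hint
      fun ω => Real.exp_le_exp.2 (abs_le.1 (hδ ω)).1
  · simpa using integral_mono hint (integrable_const _)
      fun ω => Real.exp_le_exp.2 (abs_le.1 (hδ ω)).2

theorem abs_exp_div_integral_exp_sub_one_le [IsProbabilityMeasure μ] {h : Ω → ℝ} {δ : ℝ}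
    (hh : AEMeasurable h μ) (hδ : ∀ ω, |h ω| ≤ δ) (ω : Ω) :
    |Real.exp (h ω) / ∫ ω', Real.exp (h ω') ∂μ - 1| ≤ Real.exp (2 * δ) - 1 := by
  have hlog := abs_log_integral_exp_le hh hδ
  rw [← Real.exp_log (integral_exp_pos (integrable_exp_of_abs_le hh hδ)), ← Real.exp_sub]
  refine (abs_exp_sub_one_le_exp_abs_sub_one _).trans ?_
  gcongr
  exact (abs_sub _ _).trans (by linarith [hδ ω])

theorem abs_integral_tilted_sub_integral_le [IsProbabilityMeasure μ] {h g : Ω → ℝ} {δ M : ℝ}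
    (hh : AEMeasurable h μ) (hg : AEMeasurable g μ) (hδ : ∀ ω, |h ω| ≤ δ)
    (hM : ∀ ω, |g ω| ≤ M) :
    |∫ ω, g ω ∂(μ.tilted h) - ∫ ω, g ω ∂μ| ≤ M * (Real.exp (2 * δ) - 1) := by
  have hdensity := abs_exp_div_integral_exp_sub_one_le hh hδ
  have hgint : Integrable g μ := .of_bound hg.aestronglyMeasurable M (.of_forall hM)
  have hρ : Integrable (fun ω => Real.exp (h ω) / ∫ ω', Real.exp (h ω') ∂μ) μ :=
    (integrable_exp_of_abs_le hh hδ).div_const _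
  calc |∫ ω, g ω ∂(μ.tilted h) - ∫ ω, g ω ∂μ|
      = ‖∫ ω, (Real.exp (h ω) / (∫ ω', Real.exp (h ω') ∂μ) - 1) * g ω ∂μ‖ := by
        simp only [integral_tilted, smul_eq_mul, sub_one_mul, Real.norm_eq_abs]
        rw [integral_sub (hρ.mul_bdd hg.aestronglyMeasurable (.of_forall hM)) hgint]
    _ ≤ M * (Real.exp (2 * δ) - 1) * μ.real Set.univ := by
        refine norm_integral_le_of_norm_le_const (.of_forall fun ω => ?_)
        rw [norm_mul, mul_comm]
        exact mul_le_mul (hM ω) (hdensity ω) (norm_nonneg _) ((abs_nonneg _).trans (hM ω))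
    _ = M * (Real.exp (2 * δ) - 1) := by simp

theorem prod_tilted {ν : Measure Ω'} [SFinite μ] [SFinite ν] {h : Ω → ℝ} {k : Ω' → ℝ}
    (hh : Measurable h) (hk : Measurable k) :
    (μ.tilted h).prod (ν.tilted k) = (μ.prod ν).tilted fun z => h z.1 + k z.2 := by
  have hden (z : Ω × Ω') :
      ENNReal.ofReal (Real.exp (h z.1) / ∫ ω, Real.exp (h ω) ∂μ) *
          ENNReal.ofReal (Real.exp (k z.2) / ∫ ω, Real.exp (k ω) ∂ν) =
        ENNReal.ofReal (Real.exp (h z.1 + k z.2) /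
          ∫ z, Real.exp (h z.1 + k z.2) ∂(μ.prod ν)) := by
    simp only [Real.exp_add]
    rw [integral_prod_mul (fun ω => Real.exp (h ω)) fun ω => Real.exp (k ω),
      ← ENNReal.ofReal_mul (by positivity), div_mul_div_comm]
  rw [Measure.tilted, Measure.tilted, prod_withDensity (by fun_prop) (by fun_prop),
    funext hden, Measure.tilted]

theorem measurePreserving_tilted_comp {ν : Measure Ω'} {e : Ω ≃ᵐ Ω'}
    (he : MeasurePreserving e μ ν) (h : Ω' → ℝ) :
    MeasurePreserving e (μ.tilted (h ∘ e)) (ν.tilted h) := by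
  refine ⟨e.measurable, Measure.ext fun A hA => ?_⟩
  rw [Measure.map_apply e.measurable hA, tilted_apply' _ _ (e.measurable hA),
    tilted_apply' _ _ hA, ← he.setLIntegral_comp_preimage_emb e.measurableEmbedding,
    ← he.integral_comp' (g := fun ω => Real.exp (h ω))]
  rfl

end Tilted

section Count

variable {Ω Ω' : Type*} [MeasurableSpace Ω] [MeasurableSpace Ω']

theorem prod_count_count [Finite Ω] [Finite Ω'] [MeasurableSingletonClass Ω]
    [MeasurableSingletonClass Ω'] :
    (Measure.count : Measure Ω).prod (Measure.count : Measure Ω') = Measure.count := by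
  refine Measure.prod_eq fun s t hs ht => ?_
  rw [Measure.count_apply hs, Measure.count_apply ht, Measure.count_apply (hs.prod ht),
    Set.encard_prod, ENat.toENNReal_mul]

theorem map_tilted_count [Fintype Ω] [MeasurableSingletonClass Ω] (h : Ω → ℝ) (X : Ω → Ω') :
    (Measure.count.tilted h).map X =
      (∑ ω, ENNReal.ofReal (Real.exp (h ω)))⁻¹ •
        ∑ ω, ENNReal.ofReal (Real.exp (h ω)) • Measure.dirac (X ω) := by
  classical
  rcases isEmpty_or_nonempty Ω with hΩ | hΩ
  · simp [Measure.eq_zero_of_isEmpty]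
  have hZ : 0 < ∑ ω, Real.exp (h ω) :=
    Finset.sum_pos (fun ω _ => Real.exp_pos _) Finset.univ_nonempty
  ext A hA
  rw [Measure.map_apply (measurable_of_countable X) hA, tilted_apply,
    ← lintegral_indicator (measurable_of_countable X hA), lintegral_count, tsum_fintype]
  simp only [integral_count, Set.indicator_apply]
  simp [hA, Set.indicator_apply, Finset.mul_sum, ENNReal.ofReal_div_of_pos hZ,
    ENNReal.ofReal_sum_of_nonneg, Real.exp_nonneg, ENNReal.div_eq_inv_mul]

theorem measurePreserving_count (e : Ω ≃ᵐ Ω') :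
    MeasurePreserving e Measure.count Measure.count := by
  refine ⟨e.measurable, Measure.ext fun A hA => ?_⟩
  rw [Measure.map_apply e.measurable hA, Measure.count_apply (e.measurable hA),
    Measure.count_apply hA, Set.encard_preimage_of_bijective e.bijective]

end Count

section CurieWeiss

variable {ι : Type*} [Fintype ι]

/-- The average spin of a configuration, equal to `0` if there are no sites. -/
def magnetization (s : ι → Bool) : ℝ := (∑ i, spinVal (s i)) / Fintype.card ι

theorem card_mul_magnetization (s : ι → Bool) :
    Fintype.card ι * magnetization s = ∑ i, spinVal (s i) := by
  rcases isEmpty_or_nonempty ι with hι | hι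
  · simp
  · exact mul_div_cancel₀ _ (by simp)

theorem abs_spinVal (s : Bool) : |spinVal s| = 1 := by cases s <;> simp [spinVal]

theorem abs_magnetization_le_one (s : ι → Bool) : |magnetization s| ≤ 1 := by
  rw [magnetization, abs_div, Nat.abs_cast]
  refine div_le_one_of_le₀ ((Finset.abs_sum_le_sum_abs _ _).trans_eq ?_) (Nat.cast_nonneg _)
  simp [abs_spinVal]

theorem spinVal_not (s : Bool) : spinVal (!s) = -spinVal s := by cases s <;> simp [spinVal]

/-- The global spin flip `σ ↦ -σ`, the symmetry relating the two phases of the Curie–Weiss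
model. -/
def spinFlip (ι : Type*) : (ι → Bool) ≃ᵐ (ι → Bool) :=
  .ofInvolutive (fun s i => !s i) (fun s => by simp) (by fun_prop)

theorem magnetization_spinFlip (s : ι → Bool) :
    magnetization (spinFlip ι s) = -magnetization s := by
  have hflip (i : ι) : spinVal (spinFlip ι s i) = -spinVal (s i) := spinVal_not (s i)
  simp only [magnetization, hflip, Finset.sum_neg_distrib, neg_div]

theorem sum_spinVal (s : ι → Bool) :
    ∑ i, spinVal (s i) = 2 * ({i | s i} : Finset ι).card - Fintype.card ι := by
  have hspin (i : ι) : spinVal (s i) = 2 * (if s i then 1 else 0) - 1 := by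
    cases s i <;> norm_num [spinVal]
  simp only [hspin, Finset.sum_sub_distrib, ← Finset.mul_sum, Finset.sum_boole]
  simp

theorem card_image_magnetization_le [DecidableEq ι] :
    (Finset.univ.image (magnetization : (ι → Bool) → ℝ)).card ≤ Fintype.card ι + 1 := by
  have hsub : Finset.univ.image (magnetization : (ι → Bool) → ℝ) ⊆
      (Finset.range (Fintype.card ι + 1)).image fun k : ℕ =>
        (2 * k - Fintype.card ι : ℝ) / Fintype.card ι := by
    intro x hx
    obtain ⟨s, -, rfl⟩ := Finset.mem_image.1 hx
    exact Finset.mem_image.2 ⟨_, Finset.mem_range.2 (Nat.lt_succ_of_le (Finset.card_le_univ _)),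
      by rw [magnetization, sum_spinVal]⟩
  exact (Finset.card_le_card hsub).trans (Finset.card_image_le.trans_eq (Finset.card_range _))

theorem sum_exp_mul_sum_spinVal [DecidableEq ι] (t : ℝ) :
    ∑ s : ι → Bool, Real.exp (t * ∑ i, spinVal (s i)) = (2 * Real.cosh t) ^ Fintype.card ι := by
  simp only [Finset.mul_sum, Real.exp_sum]
  rw [← Fintype.prod_sum fun (_ : ι) s => Real.exp (t * spinVal s)]
  have hsite : ∑ s : Bool, Real.exp (t * spinVal s) = 2 * Real.cosh t := by
    simp [spinVal, Real.cosh_eq, mul_div_cancel₀]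
  simp only [hsite, Finset.prod_const, Finset.card_univ]

variable (ι) in
/-- The Curie–Weiss Gibbs measure at inverse temperature `b` on the sites `ι`: the weight of a
configuration with `n` spins and total spin `S` is proportional to `exp (b * S ^ 2 / (2 * n))`. -/
def curieWeiss (b : ℝ) : Measure (ι → Bool) :=
  Measure.count.tilted fun s => Fintype.card ι * (b * magnetization s ^ 2 / 2)

instance (b : ℝ) : IsProbabilityMeasure (curieWeiss ι b) :=
  isProbabilityMeasure_tilted .of_finite

variable {b : ℝ}

/-- The linear energy tangent at `m` to the Curie–Weiss energy, as a function of the magnetization.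
It lies below the Curie–Weiss energy when `0 ≤ b` and its partition function is explicit. -/
def tangentEnergy (b m : ℝ) (s : ι → Bool) : ℝ :=
  Fintype.card ι * (b * (m * magnetization s - m ^ 2 / 2))

theorem integral_exp_tangentEnergy (b m : ℝ) :
    ∫ s : ι → Bool, Real.exp (tangentEnergy b m s) ∂Measure.count =
      Real.exp (Fintype.card ι * freeEnergy b m) := by
  classical
  have hlinear (s : ι → Bool) : tangentEnergy b m s =
      b * m * (∑ i, spinVal (s i)) + -(Fintype.card ι * (b * m ^ 2 / 2)) := by
    rw [tangentEnergy, ← card_mul_magnetization]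
    ring
  simp only [integral_count, hlinear, Real.exp_add, ← Finset.sum_mul]
  rw [sum_exp_mul_sum_spinVal, exp_mul_freeEnergy]

theorem exp_mul_freeEnergy_le_integral (hb : 0 ≤ b) (m : ℝ) :
    Real.exp (Fintype.card ι * freeEnergy b m) ≤
      ∫ s : ι → Bool, Real.exp (Fintype.card ι * (b * magnetization s ^ 2 / 2))
        ∂Measure.count := by
  rw [← integral_exp_tangentEnergy]
  refine integral_mono .of_finite .of_finite fun s => Real.exp_le_exp.2 ?_
  rw [tangentEnergy]
  gcongr
  nlinarith [mul_nonneg hb (sq_nonneg (magnetization s - m))]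

theorem curieWeiss_magnetization_eq_le (hb : 0 ≤ b) (m x : ℝ) :
    (curieWeiss ι b).real {s | magnetization s = x} ≤
      Real.exp (Fintype.card ι * (freeEnergy b x - freeEnergy b m)) := by
  calc (curieWeiss ι b).real {s | magnetization s = x}
      ≤ (∫ s : ι → Bool, Real.exp (tangentEnergy b x s) ∂Measure.count) / _ := by
        refine measureReal_tilted_le (.of_discrete) .of_finite fun s hs => ?_
        rw [tangentEnergy, show magnetization s = x from hs]
        apply le_of_eq
        ring
    _ ≤ Real.exp (Fintype.card ι * freeEnergy b x) /
          Real.exp (Fintype.card ι * freeEnergy b m) := by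
        rw [integral_exp_tangentEnergy]
        gcongr
        exact exp_mul_freeEnergy_le_integral hb m
    _ = _ := by rw [← Real.exp_sub, mul_sub]

theorem curieWeiss_magnetization_mem_le (hb : 0 ≤ b) {m c : ℝ} {K : Set ℝ}
    (hK : ∀ x ∈ K, freeEnergy b x ≤ freeEnergy b m - c) :
    (curieWeiss ι b).real {s | magnetization s ∈ K} ≤
      (Fintype.card ι + 1) * Real.exp (-c) ^ Fintype.card ι := by
  classical
  let values : Finset ℝ := {x ∈ Finset.univ.image (magnetization : (ι → Bool) → ℝ) | x ∈ K}
  have hvalues : {s : ι → Bool | magnetization s ∈ K} ⊆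
      ⋃ x ∈ values, {s | magnetization s = x} := fun s hs =>
    Set.mem_biUnion (show magnetization s ∈ values by simpa [values] using hs) rfl
  calc (curieWeiss ι b).real {s | magnetization s ∈ K}
      ≤ ∑ x ∈ values, (curieWeiss ι b).real {s | magnetization s = x} :=
        (measureReal_mono hvalues (measure_ne_top _ _)).trans (measureReal_biUnion_finset_le _ _)
    _ ≤ ∑ _x ∈ values, Real.exp (-c) ^ Fintype.card ι := by
        refine Finset.sum_le_sum fun x hx => (curieWeiss_magnetization_eq_le hb m x).trans ?_
        rw [← Real.exp_nat_mul]
        gcongr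
        linarith [hK x (Finset.mem_filter.1 hx).2]
    _ ≤ (Fintype.card ι + 1) * Real.exp (-c) ^ Fintype.card ι := by
        rw [Finset.sum_const, nsmul_eq_mul]
        gcongr
        exact_mod_cast (Finset.card_filter_le _ _).trans card_image_magnetization_le

theorem tendsto_curieWeiss_abs_magnetization {m : ℝ} (hb : 0 < b)
    (hm : IsGreatest {z | z = Real.tanh (b * z)} m) {δ : ℝ} (hδ : 0 < δ) :
    Tendsto (fun n => (curieWeiss (Fin n) b).real {s | δ ≤ dist |magnetization s| m}) atTop
      (nhds 0) := by
  have hK : IsCompact (Set.Icc (-1) 1 ∩ {x : ℝ | δ ≤ dist |x| m}) :=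
    isCompact_Icc.inter_right (isClosed_le continuous_const (by fun_prop))
  obtain ⟨c, hc, hgap⟩ := exists_freeEnergy_le_sub hb hm hK fun x hx hxm =>
    (hδ.trans_le hx.2).ne' (dist_eq_zero.2 hxm)
  have hr : Real.exp (-c) < 1 := Real.exp_lt_one_iff.2 (neg_neg_of_pos hc)
  have hlim : Tendsto (fun n : ℕ => (n + 1) * Real.exp (-c) ^ n) atTop (nhds 0) := by
    simpa [add_mul] using
      (tendsto_self_mul_const_pow_of_lt_one (Real.exp_pos _).le hr).add
        (tendsto_pow_atTop_nhds_zero_of_lt_one (Real.exp_pos _).le hr)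
  refine squeeze_zero (fun _ => measureReal_nonneg) (fun n => ?_) hlim
  calc (curieWeiss (Fin n) b).real {s | δ ≤ dist |magnetization s| m}
      ≤ (curieWeiss (Fin n) b).real
          {s | magnetization s ∈ Set.Icc (-1) 1 ∩ {x : ℝ | δ ≤ dist |x| m}} :=
        measureReal_mono fun s hs => ⟨abs_le.1 (abs_magnetization_le_one s), hs⟩
    _ ≤ _ := curieWeiss_magnetization_mem_le hb.le hgap
    _ = _ := by rw [Fintype.card_fin]

theorem measurePreserving_spinFlip (b : ℝ) :
    MeasurePreserving (spinFlip ι) (curieWeiss ι b) (curieWeiss ι b) := by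
  have henergy : (fun s : ι → Bool => Fintype.card ι * (b * magnetization s ^ 2 / 2)) ∘
      spinFlip ι = fun s => Fintype.card ι * (b * magnetization s ^ 2 / 2) := by
    funext s
    simp [magnetization_spinFlip]
  conv => enter [2]; rw [curieWeiss, ← henergy]
  exact measurePreserving_tilted_comp (measurePreserving_count _) _

end CurieWeiss

section Concentration

open scoped BoundedContinuousFunction

theorem abs_integral_comp_sub_le {E Ω : Type*} [PseudoMetricSpace E] [MeasurableSpace E]
    [OpensMeasurableSpace E] [MeasurableSpace Ω] {P : Measure Ω} [IsProbabilityMeasure P]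
    {X : Ω → E} (hX : Measurable X) (g : E →ᵇ ℝ) {c : E} {δ ε : ℝ} (hε : 0 ≤ ε)
    (hg : ∀ x, dist x c < δ → dist (g x) (g c) ≤ ε) :
    |∫ ω, g (X ω) ∂P - g c| ≤ ε + 2 * ‖g‖ * P.real {ω | δ ≤ dist (X ω) c} := by
  set A := {ω | δ ≤ dist (X ω) c}
  have hA : MeasurableSet A :=
    hX (isClosed_le continuous_const (continuous_id.dist continuous_const)).measurableSet
  have hpointwise (ω : Ω) : ‖g (X ω) - g c‖ ≤ ε + A.indicator (fun _ => 2 * ‖g‖) ω := by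
    by_cases hω : ω ∈ A
    · rw [Set.indicator_of_mem hω, ← dist_eq_norm]
      exact (g.dist_le_two_norm _ _).trans (le_add_of_nonneg_left hε)
    · rw [Set.indicator_of_notMem hω, add_zero, ← dist_eq_norm]
      exact hg _ (not_le.1 hω)
  have hgX : Integrable (fun ω => g (X ω)) P :=
    .of_bound (g.continuous.measurable.comp hX).aestronglyMeasurable ‖g‖
      (.of_forall fun ω => g.norm_coe_le_norm _)
  calc |∫ ω, g (X ω) ∂P - g c|
      = ‖∫ ω, (g (X ω) - g c) ∂P‖ := by
        rw [integral_sub hgX (integrable_const _)]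
        simp
    _ ≤ ∫ ω, (ε + A.indicator (fun _ => 2 * ‖g‖) ω) ∂P :=
        norm_integral_le_of_norm_le ((integrable_const _).add ((integrable_const _).indicator hA))
          (.of_forall hpointwise)
    _ = ε + 2 * ‖g‖ * P.real A := by
        rw [integral_add (integrable_const _) ((integrable_const _).indicator hA),
          integral_indicator hA]
        simp [mul_comm]

theorem tendsto_integral_of_tendsto_measure_dist {κ : Type*} {l : Filter κ} {E : Type*}
    [PseudoMetricSpace E] [MeasurableSpace E] [OpensMeasurableSpace E] {Ω : κ → Type*}
    [∀ i, MeasurableSpace (Ω i)] {P : ∀ i, Measure (Ω i)} [∀ i, IsProbabilityMeasure (P i)]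
    {X : ∀ i, Ω i → E} (hX : ∀ i, Measurable (X i)) {c : E}
    (hconc : ∀ δ > 0, Tendsto (fun i => (P i).real {ω | δ ≤ dist (X i ω) c}) l (nhds 0))
    (g : E →ᵇ ℝ) : Tendsto (fun i => ∫ ω, g (X i ω) ∂(P i)) l (nhds (g c)) := by
  rw [Metric.tendsto_nhds]
  intro ε hε
  obtain ⟨δ, hδ, hg⟩ := Metric.continuousAt_iff.1 g.continuous.continuousAt (ε / 2) (half_pos hε)
  have hlim : Tendsto
      (fun i => ε / 2 + 2 * ‖g‖ * (P i).real {ω | δ ≤ dist (X i ω) c}) l (nhds (ε / 2)) := by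
    simpa using ((hconc δ hδ).const_mul (2 * ‖g‖)).const_add (ε / 2)
  filter_upwards [hlim.eventually_lt_const (half_lt_self hε)] with i hi
  exact (abs_integral_comp_sub_le (hX i) g (half_pos hε).le fun x hx => (hg hx).le).trans_lt hi

end Concentration

section TwoBlocks

open scoped BoundedContinuousFunction

/-- The average of `f` over the four sign changes of the coordinates, that is, the integral of `f`
against the uniform mixture of the Dirac masses at the points `(±x, ±y)`. -/
def signAverage (f : (ℝ × ℝ) →ᵇ ℝ) : (ℝ × ℝ) →ᵇ ℝ :=
  (4 : ℝ)⁻¹ • (f + f.compContinuous ⟨fun x => (x.1, -x.2), by fun_prop⟩ +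
    f.compContinuous ⟨fun x => (-x.1, x.2), by fun_prop⟩ +
    f.compContinuous ⟨fun x => (-x.1, -x.2), by fun_prop⟩)

theorem signAverage_apply (f : (ℝ × ℝ) →ᵇ ℝ) (x y : ℝ) :
    signAverage f (x, y) = (f (x, y) + f (x, -y) + f (-x, y) + f (-x, -y)) / 4 := by
  rw [div_eq_inv_mul]
  rfl

theorem signAverage_abs (f : (ℝ × ℝ) →ᵇ ℝ) (x y : ℝ) :
    signAverage f (|x|, |y|) = signAverage f (x, y) := by
  rcases abs_choice x with hx | hx <;> rcases abs_choice y with hy | hy <;>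
    simp only [hx, hy, signAverage_apply, neg_neg] <;> ring

theorem integral_fourPoint (f : (ℝ × ℝ) →ᵇ ℝ) (x y : ℝ) :
    ∫ z, f z ∂((4 : ENNReal)⁻¹ • (Measure.dirac (x, y) + Measure.dirac (x, -y) +
      Measure.dirac (-x, y) + Measure.dirac (-x, -y))) = signAverage f (x, y) := by
  have hf (z : ℝ × ℝ) : Integrable f (Measure.dirac z) := f.integrable _
  rw [integral_smul_measure, integral_add_measure (((hf _).add_measure (hf _)).add_measure (hf _))
    (hf _), integral_add_measure ((hf _).add_measure (hf _)) (hf _),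
    integral_add_measure (hf _) (hf _)]
  simp [signAverage_apply, div_eq_inv_mul]

variable {ι : Type*} [Fintype ι]

/-- The pair of magnetizations of the two blocks. -/
def blockMagnetizations (σ : (ι → Bool) × (ι → Bool)) : ℝ × ℝ :=
  (magnetization σ.1, magnetization σ.2)

variable (ι) in
/-- Two independent Curie–Weiss models at inverse temperature `b`: the Gibbs measure of the
two-block model without coupling. -/
def twoBlockCurieWeiss (b : ℝ) : Measure ((ι → Bool) × (ι → Bool)) :=
  (curieWeiss ι b).prod (curieWeiss ι b)

instance (b : ℝ) : IsProbabilityMeasure (twoBlockCurieWeiss ι b) :=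
  inferInstanceAs (IsProbabilityMeasure ((curieWeiss ι b).prod (curieWeiss ι b)))

theorem integral_signAverage_blockMagnetizations (f : (ℝ × ℝ) →ᵇ ℝ) (b : ℝ) :
    ∫ σ, signAverage f (blockMagnetizations σ) ∂(twoBlockCurieWeiss ι b) =
      ∫ σ, f (blockMagnetizations σ) ∂(twoBlockCurieWeiss ι b) := by
  have hflip := measurePreserving_spinFlip (ι := ι) b
  have hid := MeasurePreserving.id (curieWeiss ι b)
  have hsnd := (hid.prod hflip).integral_comp
    ((MeasurableEquiv.refl _).prodCongr (spinFlip ι)).measurableEmbedding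
    fun σ => f (blockMagnetizations σ)
  have hfst := (hflip.prod hid).integral_comp
    ((spinFlip ι).prodCongr (MeasurableEquiv.refl _)).measurableEmbedding
    fun σ => f (blockMagnetizations σ)
  have hboth := (hflip.prod hflip).integral_comp
    ((spinFlip ι).prodCongr (spinFlip ι)).measurableEmbedding
    fun σ => f (blockMagnetizations σ)
  simp only [blockMagnetizations, Prod.map_fst, Prod.map_snd, id_eq, magnetization_spinFlip,
    twoBlockCurieWeiss, signAverage_apply] at hsnd hfst hboth ⊢
  rw [integral_div, integral_add .of_finite .of_finite, integral_add .of_finite .of_finite,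
    integral_add .of_finite .of_finite, hsnd, hfst, hboth]
  ring

variable {b m : ℝ}

theorem tendsto_twoBlockCurieWeiss_abs_blockMagnetizations (hb : 0 < b)
    (hm : IsGreatest {z | z = Real.tanh (b * z)} m) {δ : ℝ} (hδ : 0 < δ) :
    Tendsto (fun n => (twoBlockCurieWeiss (Fin n) b).real
      {σ | δ ≤ dist (|magnetization σ.1|, |magnetization σ.2|) (m, m)}) atTop (nhds 0) := by
  have hone := tendsto_curieWeiss_abs_magnetization hb hm hδ
  have htwo := hone.add hone
  rw [add_zero] at htwo
  refine squeeze_zero (fun _ => measureReal_nonneg) (fun n => ?_) htwo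
  let A : Set (Fin n → Bool) := {s | δ ≤ dist |magnetization s| m}
  let μ := curieWeiss (Fin n) b
  have hA : NullMeasurableSet A μ := MeasurableSet.of_discrete.nullMeasurableSet
  calc (μ.prod μ).real {σ | δ ≤ dist (|magnetization σ.1|, |magnetization σ.2|) (m, m)}
      ≤ (μ.prod μ).real (Prod.fst ⁻¹' A ∪ Prod.snd ⁻¹' A) :=
        measureReal_mono fun σ (hσ : δ ≤ dist _ _) => by rwa [Prod.dist_eq, le_max_iff] at hσ
    _ ≤ (μ.prod μ).real (Prod.fst ⁻¹' A) + (μ.prod μ).real (Prod.snd ⁻¹' A) :=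
        measureReal_union_le _ _
    _ = μ.real A + μ.real A := by
        rw [measurePreserving_fst.measureReal_preimage hA,
          measurePreserving_snd.measureReal_preimage hA]

theorem tendsto_integral_twoBlockCurieWeiss (hb : 0 < b)
    (hm : IsGreatest {z | z = Real.tanh (b * z)} m) (f : (ℝ × ℝ) →ᵇ ℝ) :
    Tendsto (fun n => ∫ σ, f (blockMagnetizations σ) ∂(twoBlockCurieWeiss (Fin n) b)) atTop
      (nhds (signAverage f (m, m))) := by
  have hlim := tendsto_integral_of_tendsto_measure_dist
    (fun n => measurable_of_countable fun σ : (Fin n → Bool) × (Fin n → Bool) =>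
      (|magnetization σ.1|, |magnetization σ.2|))
    (fun δ hδ => tendsto_twoBlockCurieWeiss_abs_blockMagnetizations hb hm hδ) (signAverage f)
  refine hlim.congr fun n => ?_
  simp only [signAverage_abs]
  exact integral_signAverage_blockMagnetizations f b

end TwoBlocks

section Coupling

open scoped BoundedContinuousFunction

variable {ι : Type*} [Fintype ι]

/-- The number of bonds between the two blocks kept by the dilution `ε`. -/
def bondCount (ε : ι → Bool) : ℝ := ∑ i, if ε i then 1 else 0

/-- Minus the part of the diluted Hamiltonian coupling the two blocks: `α` times the sum of
`σᵢ σᵢ₊ₙ` over the bonds kept by `ε`. -/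
def bondInteraction (α : ℝ) (ε : ι → Bool) (σ : (ι → Bool) × (ι → Bool)) : ℝ :=
  α * ∑ i, (if ε i then (1 : ℝ) else 0) * (spinVal (σ.1 i) * spinVal (σ.2 i))

theorem abs_bondInteraction_le (α : ℝ) (ε : ι → Bool) (σ : (ι → Bool) × (ι → Bool)) :
    |bondInteraction α ε σ| ≤ |α| * bondCount ε := by
  rw [bondInteraction, abs_mul]
  gcongr
  refine (Finset.abs_sum_le_sum_abs _ _).trans_eq (Finset.sum_congr rfl fun i _ => ?_)
  rw [abs_mul, abs_mul, abs_spinVal, abs_spinVal, mul_one, mul_one]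
  exact abs_of_nonneg (by split_ifs <;> norm_num)

theorem twoBlockCurieWeiss_eq_tilted_count (b : ℝ) :
    twoBlockCurieWeiss ι b = Measure.count.tilted fun σ =>
      Fintype.card ι * (b * magnetization σ.1 ^ 2 / 2) +
        Fintype.card ι * (b * magnetization σ.2 ^ 2 / 2) := by
  rw [twoBlockCurieWeiss, curieWeiss, prod_tilted (measurable_of_countable _)
    (measurable_of_countable _), prod_count_count]

theorem mag1_eq_magnetization (n : ℕ) (σ : TwoConf n) : mag1 n σ = magnetization σ.1 := by
  rw [mag1, magnetization, Fintype.card_fin, div_mul_cancel_left₀ two_ne_zero,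
    div_eq_inv_mul]

theorem mag2_eq_magnetization (n : ℕ) (σ : TwoConf n) : mag2 n σ = magnetization σ.2 :=
  mag1_eq_magnetization n σ.swap

theorem neg_dilH_eq (n : ℕ) (α β : ℝ) (ε : Fin n → Bool) (σ : TwoConf n) :
    -dilH n α β ε σ = n * (β / 2 * magnetization σ.1 ^ 2 / 2) +
      n * (β / 2 * magnetization σ.2 ^ 2 / 2) + bondInteraction α ε σ := by
  have hsq (s : Fin n → Bool) :
      ∑ i, ∑ j, spinVal (s i) * spinVal (s j) = (n * magnetization s) ^ 2 := by
    rw [← Finset.sum_mul_sum, ← card_mul_magnetization, Fintype.card_fin, sq]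
  rw [dilH, hsq, hsq, bondInteraction]
  rcases eq_or_ne n 0 with rfl | hn
  · simp
  · field_simp
    ring

theorem dilMagDist_eq_map_tilted (n : ℕ) (α β : ℝ) (ε : Fin n → Bool) :
    dilMagDist n α β ε = ((twoBlockCurieWeiss (Fin n) (β / 2)).tilted (bondInteraction α ε)).map
      blockMagnetizations := by
  rw [twoBlockCurieWeiss_eq_tilted_count, tilted_tilted .of_finite, map_tilted_count]
  simp [dilMagDist, neg_dilH_eq, mag1_eq_magnetization, mag2_eq_magnetization,
    blockMagnetizations]

theorem abs_integral_dilMagDist_sub_le (n : ℕ) (α β : ℝ) (ε : Fin n → Bool)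
    (f : (ℝ × ℝ) →ᵇ ℝ) :
    |∫ x, f x ∂(dilMagDist n α β ε) -
        ∫ σ, f (blockMagnetizations σ) ∂(twoBlockCurieWeiss (Fin n) (β / 2))| ≤
      ‖f‖ * (Real.exp (2 * (|α| * bondCount ε)) - 1) := by
  rw [dilMagDist_eq_map_tilted, integral_map (measurable_of_countable _).aemeasurable
    f.continuous.aestronglyMeasurable]
  exact abs_integral_tilted_sub_integral_le (measurable_of_countable _).aemeasurable
    (measurable_of_countable _).aemeasurable (abs_bondInteraction_le α ε)
    fun σ => f.norm_coe_le_norm _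

end Coupling

section Dilution

open ProbabilityTheory
open scoped BoundedContinuousFunction

variable {ι : Type*} [Fintype ι]

variable (ι) in
/-- The law of i.i.d. dilution variables with success probability `q`. -/
def dilutionMeasure (q : unitInterval) : Measure (ι → Bool) :=
  Measure.pi fun _ => bernoulliMeasure true false q

instance (q : unitInterval) : IsProbabilityMeasure (dilutionMeasure ι q) :=
  inferInstanceAs (IsProbabilityMeasure (Measure.pi fun _ : ι => bernoulliMeasure true false q))

theorem integral_bondCount (q : unitInterval) :
    ∫ ε, bondCount ε ∂(dilutionMeasure ι q) = Fintype.card ι * q := by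
  simp only [bondCount]
  rw [integral_finsetSum _ fun i _ => .of_finite]
  have hbond (i : ι) : ∫ ε, (if ε i then (1 : ℝ) else 0) ∂(dilutionMeasure ι q) = q := by
    rw [dilutionMeasure, integral_comp_eval (X := fun _ => Bool)
      (f := fun s => if s then (1 : ℝ) else 0) .of_discrete, integral_bernoulliMeasure]
    simp
  simp [hbond]

theorem bernProb_eq_dilutionMeasure (n : ℕ) (q : unitInterval) (A : Set (Fin n → Bool)) :
    bernProb n q A = (dilutionMeasure (Fin n) q).real A := by
  classical
  have hweight (ε : Fin n → Bool) :
      (dilutionMeasure (Fin n) q).real {ε} = ∏ i, if ε i then (q : ℝ) else 1 - q := by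
    rw [measureReal_def, dilutionMeasure, Measure.pi_singleton, ENNReal.toReal_prod]
    refine Finset.prod_congr rfl fun i _ => ?_
    cases ε i <;> simp
  rw [← integral_indicator_one .of_discrete, integral_fintype .of_finite]
  simp only [bernProb, hweight, Set.indicator_apply]
  simp

theorem bernProb_nonneg (n : ℕ) {q : ℝ} (hq : q ∈ Set.Icc 0 1) (A : Set (Fin n → Bool)) :
    0 ≤ bernProb n q A :=
  (bernProb_eq_dilutionMeasure n ⟨q, hq⟩ A).symm ▸ measureReal_nonneg

theorem bernProb_le_of_le_mul_bondCount (n : ℕ) {q a t : ℝ} (hq : q ∈ Set.Icc 0 1)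
    (ha : 0 ≤ a) (ht : 0 < t) {A : Set (Fin n → Bool)} (hA : ∀ ε ∈ A, t ≤ a * bondCount ε) :
    bernProb n q A ≤ a * (n * q) / t := by
  have hnonneg (ε : Fin n → Bool) : 0 ≤ a * bondCount ε :=
    mul_nonneg ha (Finset.sum_nonneg fun i _ => by split_ifs <;> norm_num)
  have hmarkov := mul_meas_ge_le_integral_of_nonneg (μ := dilutionMeasure (Fin n) ⟨q, hq⟩)
    (.of_forall hnonneg) .of_finite t
  rw [integral_const_mul, integral_bondCount, Fintype.card_fin] at hmarkov
  rw [le_div_iff₀' ht]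
  calc t * bernProb n q A
      = t * (dilutionMeasure (Fin n) ⟨q, hq⟩).real A := by
        rw [← bernProb_eq_dilutionMeasure]
    _ ≤ t * (dilutionMeasure (Fin n) ⟨q, hq⟩).real {ε | t ≤ a * bondCount ε} :=
        mul_le_mul_of_nonneg_left (measureReal_mono hA (measure_ne_top _ _)) ht.le
    _ ≤ a * (n * q) := hmarkov

theorem lt_mul_bondCount_of_lt_abs_integral_dilMagDist_sub {n : ℕ} {α β c δ η : ℝ}
    {ε : Fin n → Bool} {f : (ℝ × ℝ) →ᵇ ℝ} (hδ : ‖f‖ * (Real.exp (2 * δ) - 1) ≤ η / 2)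
    (hc : |∫ σ, f (blockMagnetizations σ) ∂(twoBlockCurieWeiss (Fin n) (β / 2)) - c| ≤ η / 2)
    (hε : η < |∫ x, f x ∂(dilMagDist n α β ε) - c|) : δ < |α| * bondCount ε := by
  by_contra! hle
  have hperturb : ‖f‖ * (Real.exp (2 * (|α| * bondCount ε)) - 1) ≤ η / 2 := by
    refine le_trans ?_ hδ
    gcongr
  have htriangle := abs_sub_le (∫ x, f x ∂(dilMagDist n α β ε))
    (∫ σ, f (blockMagnetizations σ) ∂(twoBlockCurieWeiss (Fin n) (β / 2))) c
  linarith [abs_integral_dilMagDist_sub_le n α β ε f]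

theorem exists_pos_mul_exp_two_mul_sub_one_lt (M : ℝ) {η : ℝ} (hη : 0 < η) :
    ∃ δ > 0, M * (Real.exp (2 * δ) - 1) < η := by
  have hcont : Continuous fun δ : ℝ => M * (Real.exp (2 * δ) - 1) := by fun_prop
  have hlim : Tendsto (fun δ : ℝ => M * (Real.exp (2 * δ) - 1)) (nhdsWithin 0 (Set.Ioi 0))
      (nhds 0) := (hcont.tendsto' 0 0 (by simp)).mono_left nhdsWithin_le_nhds
  exact (eventually_mem_nhdsWithin.and (hlim.eventually_lt_const hη)).exists

end Dilution

theorem diluted_mixed_limit_in_probability_general {β : ℝ} (hβ : 0 < β) {mp : ℝ}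
    (hmp : IsGreatest {z | z = Real.tanh (β / 2 * z)} mp) {α p : ℕ → ℝ}
    (hp : ∀ N, p N ∈ Set.Icc (0 : ℝ) 1)
    (hpNα : Tendsto (fun N : ℕ => p N * N * α N) atTop (nhds 0))
    (f : BoundedContinuousFunction (ℝ × ℝ) ℝ) {η : ℝ} (hη : 0 < η) :
    Tendsto (fun n : ℕ =>
        bernProb n (p (2 * n))
          {ε : Fin n → Bool |
            η < |(∫ x, f x ∂(dilMagDist n (α (2 * n)) β ε)) -
              ∫ x, f x ∂((4 : ENNReal)⁻¹ •
                (Measure.dirac ((mp, mp) : ℝ × ℝ) + Measure.dirac ((mp, -mp) : ℝ × ℝ) +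
                  Measure.dirac ((-mp, mp) : ℝ × ℝ) + Measure.dirac ((-mp, -mp) : ℝ × ℝ)))|})
      atTop (nhds 0) := by
  simp only [integral_fourPoint]
  obtain ⟨δ, hδ, hperturb⟩ := exists_pos_mul_exp_two_mul_sub_one_lt ‖f‖ (half_pos hη)
  have hcurieWeiss := Metric.tendsto_nhds.1
    (tendsto_integral_twoBlockCurieWeiss (half_pos hβ) hmp f) (η / 2) (half_pos hη)
  have hmean : Tendsto (fun n : ℕ => |α (2 * n)| * (n * p (2 * n)) / δ) atTop (nhds 0) := by
    have hdouble : Tendsto (fun n : ℕ => 2 * n) atTop atTop := tendsto_id.const_mul_atTop' two_pos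
    have habs := ((hpNα.comp hdouble).abs).div_const (2 * δ)
    rw [abs_zero, zero_div] at habs
    refine habs.congr fun n => ?_
    simp only [Function.comp_apply, abs_mul, Nat.abs_cast, abs_of_nonneg (hp _).1]
    push_cast
    field_simp
  refine squeeze_zero' (.of_forall fun n => bernProb_nonneg n (hp _) _) ?_ hmean
  filter_upwards [hcurieWeiss] with n hn
  exact bernProb_le_of_le_mul_bondCount n (hp _) (abs_nonneg _) hδ fun ε hε =>
    (lt_mul_bondCount_of_lt_abs_integral_dilMagDist_sub hperturb.le hn.le hε).le

/-- Theorem 2(2): if `β > 2`, `α_N ↓ 0`, `N p(N) → ∞` and `p(N) N α_N → 0`, then the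
distribution of `m^N` under `μ^ε_{N,α_N,β}` converges in distribution in probability to
the four-point mixture `(1/4)(δ_{(m⁺,m⁺)} + δ_{(m⁺,m⁻)} + δ_{(m⁻,m⁺)} + δ_{(m⁻,m⁻)})`. -/
theorem diluted_mixed_limit_in_probability (β : ℝ) (hβ : 2 < β) (mp : ℝ)
    (hfix : mp = Real.tanh (β / 2 * mp))
    (hmax : ∀ z : ℝ, z = Real.tanh (β / 2 * z) → z ≤ mp)
    (α : ℕ → ℝ) (hαpos : ∀ N, 0 < α N)
    (hα0 : Tendsto α atTop (nhds 0))
    (p : ℕ → ℝ) (hp : ∀ N, p N ∈ Set.Ioc (0 : ℝ) 1)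
    (hNp : Tendsto (fun N : ℕ => (N : ℝ) * p N) atTop atTop)
    (hpNα : Tendsto (fun N : ℕ => p N * N * α N) atTop (nhds 0))
    (f : BoundedContinuousFunction (ℝ × ℝ) ℝ) (η : ℝ) (hη : 0 < η) :
    Tendsto (fun n : ℕ =>
        bernProb n (p (2 * n))
          {ε : Fin n → Bool |
            η < |(∫ x, f x ∂(dilMagDist n (α (2 * n)) β ε)) -
              ∫ x, f x ∂((4 : ENNReal)⁻¹ •
                (Measure.dirac ((mp, mp) : ℝ × ℝ) + Measure.dirac ((mp, -mp) : ℝ × ℝ) +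
                  Measure.dirac ((-mp, mp) : ℝ × ℝ) + Measure.dirac ((-mp, -mp) : ℝ × ℝ)))|})
      atTop (nhds 0) := by
  exact diluted_mixed_limit_in_probability_general (by linarith) ⟨hfix, fun z hz => hmax z hz⟩
    (fun N => Set.Ioc_subset_Icc_self (hp N)) hpNα f hη

end
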